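/- Let t = 2^i·ℓ + 1 where i ≥ 1 and ℓ ≥ 3 is odd, with ℓ dividing 2^i − 1 and ℓ ≠ 2^i − 1. Then deg(g_t)² > Σ_{P ∈ Sing(g_t)} m_P(g_t)², where the sum is over all singular points P of g_t with coordinates in the algebraic closure of F_2. -/

import Mathlib

open MvPolynomial

/-- The multiplicity of a two-variable polynomial `h` at a point `P = (α, β)`:
the least `m` such that the degree-`m` homogeneous component of `h(x+α, y+β)`
is nonzero. -/
noncomputable def multAt {K : Type*} [CommRing K]
    (h : MvPolynomial (Fin 2) K) (P : K × K) : ℕ :=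
  sInf {m : ℕ | homogeneousComponent m (bind₁ ![X 0 + C P.1, X 1 + C P.2] h) ≠ 0}

section helpers

variable {K : Type*} [Field K]

/-- all coefficients of degree less than `k` vanish -/
def Vn (k : ℕ) (p : MvPolynomial (Fin 2) K) : Prop :=
  ∀ d : Fin 2 →₀ ℕ, d.degree < k → coeff d p = 0

theorem Vn_zero (p : MvPolynomial (Fin 2) K) : Vn 0 p := by
  intro d hd; simp at hd

theorem Vn_mono {a b : ℕ} (h : a ≤ b) {p : MvPolynomial (Fin 2) K} (hp : Vn b p) : Vn a p :=
  fun d hd => hp d (lt_of_lt_of_le hd h)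

theorem Vn_add {k : ℕ} {p r : MvPolynomial (Fin 2) K} (hp : Vn k p) (hr : Vn k r) :
    Vn k (p + r) := by
  intro d hd; rw [coeff_add, hp d hd, hr d hd, add_zero]

theorem Vn_mul {a b : ℕ} {p r : MvPolynomial (Fin 2) K} (hp : Vn a p) (hr : Vn b r) :
    Vn (a + b) (p * r) := by
  classical
  intro d hd
  rw [coeff_mul]
  refine Finset.sum_eq_zero fun x hx => ?_
  rw [Finset.HasAntidiagonal.mem_antidiagonal] at hx
  have h : x.1.degree + x.2.degree = d.degree := by rw [← hx, map_add]
  by_cases h1 : x.1.degree < a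
  · rw [hp _ h1, zero_mul]
  · rw [hr x.2 (by omega), mul_zero]

theorem Vn_mul_left {b : ℕ} (p : MvPolynomial (Fin 2) K) {r : MvPolynomial (Fin 2) K}
    (hr : Vn b r) : Vn b (p * r) := by
  simpa using Vn_mul (Vn_zero p) hr

theorem Vn_pow {a : ℕ} {p : MvPolynomial (Fin 2) K} (hp : Vn a p) (n : ℕ) :
    Vn (n * a) (p ^ n) := by
  induction n with
  | zero => simpa using Vn_zero _
  | succ n ih => rw [pow_succ, Nat.succ_mul]; exact Vn_mul ih hp

theorem Vn_X (j : Fin 2) : Vn 1 (X j : MvPolynomial (Fin 2) K) := by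
  classical
  intro d hd
  rw [coeff_X]
  rw [if_neg]
  rintro rfl
  simp at hd

/-- the translation -/
noncomputable def trv (a b : K) : Fin 2 → MvPolynomial (Fin 2) K := ![X 0 + C a, X 1 + C b]

theorem Vn_multAt (h : MvPolynomial (Fin 2) K) (P : K × K) :
    Vn (multAt h P) (bind₁ (trv P.1 P.2) h) := by
  intro d hd
  have := Nat.notMem_of_lt_sInf hd
  simp only [Set.mem_ofPred_eq, not_not] at this
  have hren : (bind₁ ![X 0 + C P.1, X 1 + C P.2] h : MvPolynomial ℕ K) =
      rename Fin.val (bind₁ (trv P.1 P.2) h) := by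
    rw [rename_bind₁]
    congr 2
    funext j
    fin_cases j <;> simp [trv]
  rw [hren] at this
  have hdd : (Finsupp.mapDomain Fin.val d).degree = d.degree := by
    simp
  have h2 : coeff (Finsupp.mapDomain Fin.val d) (homogeneousComponent d.degree
      (rename Fin.val (bind₁ (trv P.1 P.2) h))) = 0 := by
    rw [this, coeff_zero]
  rw [coeff_homogeneousComponent, if_pos hdd,
    coeff_rename_mapDomain _ Fin.val_injective] at h2
  exact h2

variable [CharP K 2]

theorem expand (i l : ℕ) (Z : MvPolynomial (Fin 2) K) (hZ : Vn 1 Z) (a : K) :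
    ∃ R, Vn (2 * 2 ^ i) R ∧ (Z + C a) ^ (2 ^ i * l + 1) =
      C (a ^ (2 ^ i * l)) * (Z + C a) +
      C (l * a ^ (2 ^ i * (l - 1))) * (Z ^ (2 ^ i) * (Z + C a)) + R := by
  obtain ⟨k, hk⟩ := Polynomial.powAddExpansion (C a ^ (2 ^ i)) (Z ^ (2 ^ i)) l
  refine ⟨(Z + C a) * k * (Z ^ (2 ^ i)) ^ 2, ?_, ?_⟩
  · apply Vn_mul_left
    have := Vn_pow (Vn_pow hZ (2 ^ i)) 2
    simpa using this
  · rw [pow_succ, pow_mul, add_pow_char_pow (p := 2) (n := i), add_comm (Z ^ 2 ^ i), hk]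
    simp only [C_mul, C_pow, pow_mul, map_natCast]
    ring


variable {i l : ℕ} {a b : K}

/-- translated `f` -/
noncomputable def FF (t : ℕ) (a b : K) : MvPolynomial (Fin 2) K :=
  (X 0 + C a) ^ t + (X 1 + C b) ^ t + 1 + (X 0 + X 1 + C (a + b + 1)) ^ t

theorem FF_expand (i l : ℕ) (hl : Odd l) (a b : K) :
    ∃ R, Vn (2 * 2 ^ i) R ∧ FF (2 ^ i * l + 1) a b =
      (C (a ^ (2 ^ i * l)) * (X 0 + C a) + C (b ^ (2 ^ i * l)) * (X 1 + C b) + 1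
        + C ((a + b + 1) ^ (2 ^ i * l)) * (X 0 + X 1 + C (a + b + 1))) +
      (C (a ^ (2 ^ i * (l - 1))) * (X 0 ^ (2 ^ i) * (X 0 + C a)) +
       C (b ^ (2 ^ i * (l - 1))) * (X 1 ^ (2 ^ i) * (X 1 + C b)) +
       C ((a + b + 1) ^ (2 ^ i * (l - 1))) *
        ((X 0 ^ (2 ^ i) + X 1 ^ (2 ^ i)) * (X 0 + X 1 + C (a + b + 1)))) + R := by
  have hl1 : (l : K) = 1 := by
    obtain ⟨k, rfl⟩ := hl
    push_cast
    rw [CharTwo.two_eq_zero]; ring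
  obtain ⟨R1, h1, e1⟩ := expand i l (X 0) (Vn_X 0) a
  obtain ⟨R2, h2, e2⟩ := expand i l (X 1) (Vn_X 1) b
  obtain ⟨R3, h3, e3⟩ := expand i l (X 0 + X 1) (Vn_add (Vn_X 0) (Vn_X 1)) (a + b + 1)
  refine ⟨R1 + R2 + R3, Vn_add (Vn_add h1 h2) h3, ?_⟩
  rw [FF, e1, e2, e3, hl1, add_pow_char_pow (p := 2) (n := i)]
  simp only [one_mul]
  ring

theorem sing_of_Vn (hi : 2 ≤ i) (hl : Odd l) (h : Vn 2 (FF (2 ^ i * l + 1) a b)) :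
    a ^ l = 1 ∧ b ^ l = 1 ∧ (a + b + 1) ^ l = 1 := by
  classical
  have hq : 4 ≤ 2 ^ i := by
    calc 4 = 2 ^ 2 := by norm_num
      _ ≤ 2 ^ i := Nat.pow_le_pow_right (by norm_num) hi
  obtain ⟨R, hR, e⟩ := FF_expand i l hl a b
  set c := a + b + 1 with hc
  set M : MvPolynomial (Fin 2) K := C (a ^ (2 ^ i * (l - 1))) * (X 0 ^ (2 ^ i) * (X 0 + C a)) +
       C (b ^ (2 ^ i * (l - 1))) * (X 1 ^ (2 ^ i) * (X 1 + C b)) +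
       C (c ^ (2 ^ i * (l - 1))) *
        ((X 0 ^ (2 ^ i) + X 1 ^ (2 ^ i)) * (X 0 + X 1 + C c)) with hM
  have hX : ∀ j, Vn (2 ^ i) ((X j : MvPolynomial (Fin 2) K) ^ (2 ^ i)) := fun j => by
    simpa using Vn_pow (Vn_X (K := K) j) (2 ^ i)
  have hMV : Vn 2 M := by
    apply Vn_mono (show 2 ≤ 2 ^ i by omega)
    refine Vn_add (Vn_add ?_ ?_) ?_
    · apply Vn_mul_left; rw [mul_comm]; exact Vn_mul_left _ (hX 0)
    · apply Vn_mul_left; rw [mul_comm]; exact Vn_mul_left _ (hX 1)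
    · apply Vn_mul_left; rw [mul_comm]; exact Vn_mul_left _ (Vn_add (hX 0) (hX 1))
  have key : ∀ d : Fin 2 →₀ ℕ, d.degree < 2 → 
      coeff d (C (a ^ (2 ^ i * l)) * (X 0 + C a) + C (b ^ (2 ^ i * l)) * (X 1 + C b) + 1
        + C (c ^ (2 ^ i * l)) * (X 0 + X 1 + C c)) = 0 := by
    intro d hd
    have := h d hd
    rw [e, coeff_add, coeff_add, hMV d hd, hR d (by omega)] at this
    simpa using this
  have k0 := key 0 (by simp)
  have k1 := key (Finsupp.single 0 1) (by simp)
  have k2 := key (Finsupp.single 1 1) (by simp)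
  have n0 : ∀ j : Fin 2, (0 : Fin 2 →₀ ℕ) ≠ Finsupp.single j 1 := fun j h => by
    have := congrArg Finsupp.degree h
    simp at this
  have n1 : (Finsupp.single 0 1 : Fin 2 →₀ ℕ) ≠ Finsupp.single 1 1 := fun h => by
    have := DFunLike.congr_fun h 0
    simp at this
  simp only [coeff_add, coeff_C_mul, coeff_X, coeff_C, coeff_one, n0, n1, n1.symm, (n0 _).symm,
    if_true, if_false, mul_zero, mul_one, add_zero, zero_add] at k0 k1 k2
  have e1 := CharTwo.add_eq_zero.mp k1
  have e2 := CharTwo.add_eq_zero.mp k2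
  rw [e1, e2] at k0
  have h2 : (2 : K) = 0 := CharTwo.two_eq_zero
  have e3 : c ^ (2 ^ i * l) = 1 := by
    rw [hc] at k0 ⊢
    linear_combination k0 - ((a + b + 1) ^ (2 ^ i * l) * (a + b) + 1) * h2
  have inj : ∀ x : K, x ^ (2 ^ i * l) = 1 → x ^ l = 1 := by
    intro x hx
    have : (x ^ l) ^ (2 ^ i) = 1 := by rw [← pow_mul, mul_comm, hx]
    have h0 : (x ^ l - 1) ^ (2 ^ i) = 0 := by
      rw [sub_pow_char_pow (p := 2), this, one_pow, sub_self]
    exact sub_eq_zero.mp (pow_eq_zero_iff (by positivity) |>.mp h0)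
  exact ⟨inj a (e1.trans e3), inj b (e2.trans e3), inj c e3⟩

theorem not_Vn (hi : 2 ≤ i) (hl : Odd l) (hab : a + b + 1 ≠ 0) :
    ¬ Vn (2 ^ i + 2) (FF (2 ^ i * l + 1) a b) := by
  classical
  have hq : 4 ≤ 2 ^ i := by
    calc 4 = 2 ^ 2 := by norm_num
      _ ≤ 2 ^ i := Nat.pow_le_pow_right (by norm_num) hi
  intro h
  obtain ⟨R, hR, e⟩ := FF_expand i l hl a b
  set c := a + b + 1 with hc
  generalize 2 ^ i = q at *
  let d : Fin 2 →₀ ℕ := Finsupp.single 0 q + Finsupp.single 1 1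
  have hd : d.degree = q + 1 := by simp [d]
  have := h d (by omega)
  rw [e, coeff_add, hR d (by omega)] at this
  have c1 : coeff d (X 0 : MvPolynomial (Fin 2) K) = 0 := by
    rw [coeff_X, if_neg]; intro h; have := congrArg Finsupp.degree h; rw [hd] at this; simp at this; omega
  have c2 : coeff d (X 1 : MvPolynomial (Fin 2) K) = 0 := by
    rw [coeff_X, if_neg]; intro h; have := congrArg Finsupp.degree h; rw [hd] at this; simp at this; omega
  have c0 : ∀ z, coeff d (C z : MvPolynomial (Fin 2) K) = 0 := by
    intro z
    rw [coeff_C, if_neg]; intro h; have := congrArg Finsupp.degree h; rw [hd] at this; simp at this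
  have c3 : coeff d (1 : MvPolynomial (Fin 2) K) = 0 := by simpa using c0 1
  have m : ∀ u v : ℕ, coeff d ((X 0 : MvPolynomial (Fin 2) K) ^ u * X 1 ^ v) =
      if u = q ∧ v = 1 then 1 else 0 := by
    intro u v
    rw [X_pow_eq_monomial, X_pow_eq_monomial, monomial_mul, coeff_monomial]
    rw [one_mul]
    congr 1
    rw [eq_iff_iff]
    constructor
    · intro h
      have h0 := DFunLike.congr_fun h 0
      have h1 := DFunLike.congr_fun h 1
      simp [d] at h0 h1
      exact ⟨h0, h1⟩
    · rintro ⟨rfl, rfl⟩; rfl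
  have z1 : coeff d ((X 0 : MvPolynomial (Fin 2) K) ^ q * (X 0 + C a)) = 0 := by
    have e : (X 0 : MvPolynomial (Fin 2) K) ^ q * (X 0 + C a) =
      X 0 ^ (q+1) * X 1 ^ 0 + C a * (X 0 ^ q * X 1 ^ 0) := by ring
    rw [e, coeff_add, coeff_C_mul, m, m]; simp
  have z2 : coeff d ((X 1 : MvPolynomial (Fin 2) K) ^ q * (X 1 + C b)) = 0 := by
    have e : (X 1 : MvPolynomial (Fin 2) K) ^ q * (X 1 + C b) =
      X 0 ^ 0 * X 1 ^ (q+1) + C b * (X 0 ^ 0 * X 1 ^ q) := by ring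
    rw [e, coeff_add, coeff_C_mul, m, m, if_neg (by omega), if_neg (by omega)]; simp
  have z3 : coeff d (((X 0 : MvPolynomial (Fin 2) K) ^ q + X 1 ^ q) * (X 0 + X 1 + C c)) = 1 := by
    have e : ((X 0 : MvPolynomial (Fin 2) K) ^ q + X 1 ^ q) * (X 0 + X 1 + C c) =
      X 0 ^ (q+1) * X 1 ^ 0 + X 0 ^ q * X 1 ^ 1 + C c * (X 0 ^ q * X 1 ^ 0) +
      X 0 ^ 1 * X 1 ^ q + X 0 ^ 0 * X 1 ^ (q+1) + C c * (X 0 ^ 0 * X 1 ^ q) := by ring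
    rw [e]
    simp only [coeff_add, coeff_C_mul, m]
    rw [if_neg (by omega), if_pos (by simp), if_neg (by omega), if_neg (by omega),
      if_neg (by omega), if_neg (by omega)]; simp
  simp only [coeff_add, coeff_C_mul, z1, z2, z3, c0, c1, c2, c3] at this
  simp at this
  exact hab this.1

theorem translate_g (t : ℕ) (g : MvPolynomial (Fin 2) K)
    (hg : (X 0 + 1) * (X 1 + 1) * (X 0 + X 1) * g =
      X 0 ^ t + X 1 ^ t + 1 + (X 0 + X 1 + 1) ^ t) (a b : K) :
    (X 0 + C (a + 1)) * (X 1 + C (b + 1)) * (X 0 + X 1 + C (a + b)) *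
      bind₁ (trv a b) g = FF t a b := by
  have h0 := congrArg (bind₁ (trv a b)) hg
  have : (X 0 + C a + 1) * (X 1 + C b + 1) * (X 0 + C a + (X 1 + C b)) *
      (bind₁ (trv a b)) g =
    (X 0 + C a) ^ t + (X 1 + C b) ^ t + 1 + (X 0 + C a + (X 1 + C b) + 1) ^ t := by
   simpa only [trv, map_mul, map_add, map_pow, map_one, bind₁_X_right, Matrix.cons_val_zero,
    Matrix.cons_val_one] using h0
  rw [FF]
  simp only [map_add, map_one]
  rw [show (X 0 + X 1 + (C a + C b + 1) : MvPolynomial (Fin 2) K)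
    = X 0 + C a + (X 1 + C b) + 1 by ring, ← this]
  ring

/-- bound for the multiplicity -/
noncomputable def wt (q : ℕ) (P : K × K) : ℕ := by
  classical exact
  if P.1 = 1 ∧ P.2 = 1 then q - 2 else if P.1 = 1 ∨ P.2 = 1 ∨ P.1 = P.2 then q else q + 1

theorem mult_le (hi : 2 ≤ i) (hl : Odd l) (g : MvPolynomial (Fin 2) K)
    (hg : (X 0 + 1) * (X 1 + 1) * (X 0 + X 1) * g =
      X 0 ^ (2 ^ i * l + 1) + X 1 ^ (2 ^ i * l + 1) + 1 + (X 0 + X 1 + 1) ^ (2 ^ i * l + 1))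
    (P : K × K) (hP : 2 ≤ multAt g P) :
    P.1 ^ l = 1 ∧ P.2 ^ l = 1 ∧ (P.1 + P.2 + 1) ^ l = 1 ∧ multAt g P ≤ wt (2 ^ i) P := by
  classical
  obtain ⟨a, b⟩ := P
  have hV := Vn_multAt g (a, b)
  have hT := translate_g _ g hg a b
  simp only at hV ⊢
  generalize multAt g (a, b) = m at *
  obtain ⟨h1, h2, h3⟩ := sing_of_Vn (a := a) (b := b) hi hl
    (by rw [← hT]; exact Vn_mul_left _ (Vn_mono hP hV))
  refine ⟨h1, h2, h3, ?_⟩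
  have hl0 : l ≠ 0 := by rintro rfl; simp at hl
  have hc : a + b + 1 ≠ 0 := by
    intro h; rw [h, zero_pow hl0] at h3; exact zero_ne_one h3
  have key : ∀ k, Vn k ((X 0 + C (a + 1)) * (X 1 + C (b + 1)) * (X 0 + X 1 + C (a + b)) :
      MvPolynomial (Fin 2) K) → k + m ≤ 2 ^ i + 1 := by
    intro k hk
    by_contra hcon
    apply not_Vn hi hl hc
    rw [← hT]
    exact Vn_mono (by omega) (Vn_mul hk hV)
  have A : a = 1 → Vn 1 (X 0 + C (a + 1) : MvPolynomial (Fin 2) K) := by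
    rintro rfl; rw [CharTwo.add_self_eq_zero]; simpa using Vn_X 0
  have B : b = 1 → Vn 1 (X 1 + C (b + 1) : MvPolynomial (Fin 2) K) := by
    rintro rfl; rw [CharTwo.add_self_eq_zero]; simpa using Vn_X 1
  have D : a = b → Vn 1 (X 0 + X 1 + C (a + b) : MvPolynomial (Fin 2) K) := by
    rintro rfl; rw [CharTwo.add_self_eq_zero]; simpa using Vn_add (Vn_X 0) (Vn_X 1)
  unfold wt
  simp only
  split_ifs with c1 c2
  · have := key 3 (Vn_mul (Vn_mul (A c1.1) (B c1.2)) (D (c1.1.trans c1.2.symm)))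
    omega
  · have : 1 + m ≤ 2 ^ i + 1 := by
      apply key
      rcases c2 with c | c | c
      · exact Vn_mul (Vn_mul (A c) (Vn_zero _)) (Vn_zero _)
      · exact Vn_mul (Vn_mul (Vn_zero _) (B c)) (Vn_zero _)
      · exact Vn_mul_left _ (D c)
    omega
  · have := key 0 (Vn_zero _)
    omega

theorem card_filter_lt [DecidableEq K] (S : Finset K) (hS : Odd S.card) (c : K) (hc : c ≠ 0) :
    (S.filter (fun x => x + c ∈ S)).card + 1 ≤ S.card := by
  by_contra hcon
  have hle := Finset.card_filter_le S (fun x => x + c ∈ S)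
  have : S.filter (fun x => x + c ∈ S) = S :=
    Finset.eq_of_subset_of_card_le (Finset.filter_subset _ _) (by omega)
  rw [Finset.filter_eq_self] at this
  have hev : ∑ x ∈ S, (1 : ZMod 2) = 0 := by
    refine Finset.sum_involution (fun x _ => x + c) ?_ ?_ ?_ ?_
    · intros; decide
    · intro x _ _ h; apply hc; simpa using h
    · intro x hx; exact this x hx
    · intro x _; simp [add_assoc, CharTwo.add_self_eq_zero]
  simp only [Finset.sum_const, nsmul_eq_mul, mul_one] at hev
  rw [ZMod.natCast_eq_zero_iff_even] at hev
  exact Nat.not_even_iff_odd.mpr hS hev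

theorem sum_wt [DecidableEq K] (q : ℕ) (S : Finset K) (hS : Odd S.card) (h1 : (1 : K) ∈ S) :
    ∑ P ∈ (S ×ˢ S).filter (fun P => P.1 + P.2 + 1 ∈ S), wt q P ^ 2 ≤
    (q - 2) ^ 2 + (S.card - 1) * q ^ 2 +
      (S.card - 1) * (2 * q ^ 2 + (S.card - 3) * (q + 1) ^ 2) := by
  rw [Finset.sum_filter, Finset.sum_product]
  rw [← Finset.add_sum_erase S _ h1]
  refine add_le_add ?_ ?_
  · rw [← Finset.add_sum_erase S _ h1]
    refine add_le_add ?_ ?_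
    · split_ifs <;> simp [wt]
    · rw [← Finset.card_erase_of_mem h1, ← smul_eq_mul]
      apply Finset.sum_le_card_nsmul
      intro x hx
      have hx1 := Finset.ne_of_mem_erase hx
      split_ifs <;> simp [wt, hx1]
  · rw [← Finset.card_erase_of_mem h1, ← smul_eq_mul ((S.erase 1).card)]
    apply Finset.sum_le_card_nsmul
    intro x hx
    have hx1 := Finset.ne_of_mem_erase hx
    have hxS := Finset.mem_of_mem_erase hx
    simp only
    rw [← Finset.sum_filter]
    set T := S.filter (fun y => x + y + 1 ∈ S) with hT
    have hTc : T.card + 1 ≤ S.card := by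
      have := card_filter_lt S hS (x + 1) (by
        intro h; exact hx1 (CharTwo.add_eq_zero.mp h))
      convert this using 5
      ring_nf
    have hT1 : 1 ∈ T := by
      rw [hT, Finset.mem_filter]; refine ⟨h1, ?_⟩
      rw [add_assoc, CharTwo.add_self_eq_zero, add_zero]; exact hxS
    have hTx : x ∈ T.erase 1 := by
      rw [Finset.mem_erase, hT, Finset.mem_filter]; refine ⟨hx1, hxS, ?_⟩
      rw [CharTwo.add_self_eq_zero, zero_add]; exact h1
    rw [← Finset.add_sum_erase T _ hT1, ← Finset.add_sum_erase _ _ hTx, ← add_assoc]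
    refine add_le_add ?_ ?_
    · simp [wt, hx1]; omega
    · have hcard : ((T.erase 1).erase x).card ≤ S.card - 3 := by
        rw [Finset.card_erase_of_mem hTx, Finset.card_erase_of_mem hT1]; omega
      refine le_trans ?_ (Nat.mul_le_mul_right _ hcard)
      rw [← smul_eq_mul ((T.erase 1).erase x).card]
      apply Finset.sum_le_card_nsmul
      intro y hy
      have hyx := Finset.ne_of_mem_erase hy
      have hy1 := Finset.ne_of_mem_erase (Finset.mem_of_mem_erase hy)
      simp [wt, hx1, hy1, hyx.symm]

theorem arith (q l : ℕ) (hl : 3 ≤ l) (hq : 2 * l + 1 ≤ q) :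
    (q - 2) ^ 2 + (l - 1) * q ^ 2 + (l - 1) * (2 * q ^ 2 + (l - 3) * (q + 1) ^ 2)
      < (q * l - 2) ^ 2 := by
  obtain ⟨m, rfl⟩ := Nat.exists_eq_add_of_le hl
  obtain ⟨s, rfl⟩ := Nat.exists_eq_add_of_le hq
  have e1 : 2 * (3 + m) + 1 + s - 2 = 2 * m + s + 5 := by omega
  have e2 : 3 + m - 1 = m + 2 := by omega
  have e3 : 3 + m - 3 = m := by omega
  have e4 : (2 * (3 + m) + 1 + s) * (3 + m) - 2 = 2 * m ^ 2 + 13 * m + s * m + 3 * s + 19 := by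
    have : (2 * (3 + m) + 1 + s) * (3 + m) = 2 * m ^ 2 + 13 * m + s * m + 3 * s + 19 + 2 := by ring
    omega
  rw [e1, e2, e3, e4]
  zify
  have hm : (0 : ℤ) ≤ m := by positivity
  have hs : (0 : ℤ) ≤ s := by positivity
  rw [← sub_pos]
  ring_nf
  positivity

end helpers

theorem deg_ge (t : ℕ) (ht : Odd t) (ht3 : 3 ≤ t) (g : MvPolynomial (Fin 2) (ZMod 2))
    (hg : (X 0 + 1) * (X 1 + 1) * (X 0 + X 1) * g =
      X 0 ^ t + X 1 ^ t + 1 + (X 0 + X 1 + 1) ^ t) : t ≤ g.totalDegree + 3 := by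
  classical
  have up : ((X 0 + 1) * (X 1 + 1) * (X 0 + X 1) * g).totalDegree ≤ 1 + 1 + 1 + g.totalDegree := by
    refine (totalDegree_mul _ _).trans (add_le_add ((totalDegree_mul _ _).trans (add_le_add
      ((totalDegree_mul _ _).trans (add_le_add ?_ ?_)) ?_)) le_rfl)
    · exact (totalDegree_add _ _).trans (by simp)
    · exact (totalDegree_add _ _).trans (by simp)
    · exact (totalDegree_add _ _).trans (by simp)
  suffices t ≤ ((X 0 + 1) * (X 1 + 1) * (X 0 + X 1) * g).totalDegree by omega
  rw [hg]
  let d : Fin 2 →₀ ℕ := Finsupp.single 0 (t - 1) + Finsupp.single 1 1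
  have hd : d.degree = t := by
    simp only [d, map_add, Finsupp.degree_single]; omega
  by_contra hcon
  have h0 := coeff_eq_zero_of_totalDegree_lt (f := (X 0 ^ t + X 1 ^ t + 1 + (X 0 + X 1 + 1) ^ t :
    MvPolynomial (Fin 2) (ZMod 2))) (d := d) (by
      change _ < d.degree
      rw [hd]; omega)
  have hne : ∀ j m, Finsupp.single j m ≠ d := by
    intro j m h
    have h0 := DFunLike.congr_fun h 0
    have h1 := DFunLike.congr_fun h 1
    fin_cases j
    · simp [d] at h1
    · simp [d] at h0; omega
  have hne0 : 0 ≠ d := by simpa using hne 0 0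
  have hexp : ∀ n, (X 0 + 1 : MvPolynomial (Fin 2) (ZMod 2)) ^ n =
      ∑ m ∈ Finset.range (n + 1), monomial (Finsupp.single 0 m) (n.choose m : ZMod 2) := by
    intro n
    rw [add_pow]
    refine Finset.sum_congr rfl fun m _ => ?_
    rw [one_pow, mul_one, X_pow_eq_monomial, mul_comm, ← map_natCast C, C_mul_monomial, mul_one]
  have hA : coeff d ((X 0 + 1 : MvPolynomial (Fin 2) (ZMod 2)) ^ t) = 0 := by
    rw [hexp, coeff_sum]
    refine Finset.sum_eq_zero fun m _ => ?_
    rw [coeff_monomial, if_neg (hne 0 m)]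
  have hB : coeff d ((X 0 + 1 : MvPolynomial (Fin 2) (ZMod 2)) ^ (t - 1) * X 1) = 1 := by
    rw [coeff_mul_X, hexp, coeff_sum, Finset.sum_eq_single (t - 1)]
    · simp
    · intro m _ hm
      rw [coeff_monomial, if_neg]
      intro h
      exact hm (by simpa using DFunLike.congr_fun h 0)
    · intro h; simp at h
  obtain ⟨k, hk⟩ := Polynomial.powAddExpansion (X 0 + 1 : MvPolynomial (Fin 2) (ZMod 2)) (X 1) t
  have hC : coeff d (k * (X 1 : MvPolynomial (Fin 2) (ZMod 2)) ^ 2) = 0 := by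
    rw [X_pow_eq_monomial, coeff_mul_monomial', if_neg]
    intro h
    have := h 1
    simp [d] at this
  have ht1 : (t : MvPolynomial (Fin 2) (ZMod 2)) = 1 := by
    obtain ⟨k, rfl⟩ := ht
    push_cast
    have h2 : (2 : MvPolynomial (Fin 2) (ZMod 2)) = 0 := CharTwo.two_eq_zero
    linear_combination (k : MvPolynomial (Fin 2) (ZMod 2)) * h2
  rw [show (X 0 + X 1 + 1 : MvPolynomial (Fin 2) (ZMod 2)) = X 0 + 1 + X 1 by ring, hk, ht1,
    one_mul, coeff_add, coeff_add, coeff_add, coeff_add, coeff_add, hA, hB, hC,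
    X_pow_eq_monomial, X_pow_eq_monomial, coeff_monomial, coeff_monomial, coeff_one,
    if_neg (hne _ _), if_neg (hne _ _), if_neg hne0] at h0
  simp at h0

theorem stmt_15 (i l t : ℕ) (hi : 1 ≤ i) (hl : 3 ≤ l) (hlodd : Odd l)
    (ht : t = 2 ^ i * l + 1) (hdvd : l ∣ 2 ^ i - 1) (hne : l ≠ 2 ^ i - 1)
    (g : MvPolynomial (Fin 2) (ZMod 2))
    (hg : (X 0 + 1) * (X 1 + 1) * (X 0 + X 1) * g =
      X 0 ^ t + X 1 ^ t + 1 + (X 0 + X 1 + 1) ^ t)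
    (gbar : MvPolynomial (Fin 2) (AlgebraicClosure (ZMod 2)))
    (hgbar : gbar = MvPolynomial.map (algebraMap (ZMod 2) (AlgebraicClosure (ZMod 2))) g)
    (hfin : {P : AlgebraicClosure (ZMod 2) × AlgebraicClosure (ZMod 2) |
      2 ≤ multAt gbar P}.Finite) :
    ∑ P ∈ hfin.toFinset, (multAt gbar P) ^ 2 < g.totalDegree ^ 2 := by
  classical
  have : CharP (AlgebraicClosure (ZMod 2)) 2 :=
    charP_of_injective_algebraMap (algebraMap (ZMod 2) (AlgebraicClosure (ZMod 2))).injective 2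
  have hq1 : 2 ≤ 2 ^ i := by
    calc 2 = 2 ^ 1 := by norm_num
      _ ≤ 2 ^ i := Nat.pow_le_pow_right (by norm_num) hi
  have hq : 2 * l + 1 ≤ 2 ^ i := by
    obtain ⟨k, hk⟩ := hdvd
    have : 2 ≤ k := by
      by_contra hk2
      have : k = 0 ∨ k = 1 := by omega
      rcases this with rfl | rfl
      · omega
      · omega
    have : l * 2 ≤ l * k := Nat.mul_le_mul_left _ this
    omega
  have hi2 : 2 ≤ i := by
    by_contra h
    have : i = 1 := by omega
    subst this
    omega
  have hdeg : 2 ^ i * l - 2 ≤ g.totalDegree := by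
    have hodd : Odd t := by
      rw [ht]
      apply Even.add_one
      apply Even.mul_right
      exact (even_two).pow_of_ne_zero (by omega)
    have := deg_ge t hodd (by rw [ht]; nlinarith) g hg
    omega
  have hgb : (X 0 + 1) * (X 1 + 1) * (X 0 + X 1) * gbar =
      X 0 ^ (2 ^ i * l + 1) + X 1 ^ (2 ^ i * l + 1) + 1 + (X 0 + X 1 + 1) ^ (2 ^ i * l + 1) := by
    have := congrArg (MvPolynomial.map (algebraMap (ZMod 2) (AlgebraicClosure (ZMod 2)))) hg
    rw [← ht, hgbar]
    simpa using this
  let S : Finset (AlgebraicClosure (ZMod 2)) := Polynomial.nthRootsFinset l 1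
  have hmem : ∀ x, x ∈ S ↔ x ^ l = 1 := fun x => Polynomial.mem_nthRootsFinset (by omega) 1
  have hS : S.card = l := by
    have : NeZero (l : AlgebraicClosure (ZMod 2)) := ⟨by
      rw [Ne, CharP.cast_eq_zero_iff _ 2]
      exact hlodd.not_two_dvd_nat⟩
    obtain ⟨ζ, hζ⟩ := HasEnoughRootsOfUnity.exists_primitiveRoot (AlgebraicClosure (ZMod 2)) l
    exact hζ.card_nthRootsFinset
  have hsum := sum_wt (2 ^ i) S (by rwa [hS]) (by rw [hmem]; simp)
  rw [hS] at hsum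
  have har := arith (2 ^ i) l hl hq
  refine lt_of_le_of_lt ?_ (lt_of_le_of_lt hsum (lt_of_lt_of_le har (Nat.pow_le_pow_left hdeg 2)))
  have hall : ∀ P ∈ hfin.toFinset, _ := fun P hP =>
    mult_le hi2 hlodd gbar hgb P (by simpa using hP)
  refine le_trans (Finset.sum_le_sum fun P hP => Nat.pow_le_pow_left (hall P hP).2.2.2 2) ?_
  apply Finset.sum_le_sum_of_subset
  intro P hP
  obtain ⟨h1, h2, h3, -⟩ := hall P hP
  rw [Finset.mem_filter, Finset.mem_product, hmem, hmem, hmem]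
  exact ⟨⟨h1, h2⟩, h3⟩
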